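/- arXiv:2508.01243 — 2 statements merged into one kernel-verified Lean document; each statement's English description precedes it below -/
import Mathlib

section
/- Let μ1, μ2 ∈ P_2(ℝ^d) and θ ∈ S^{d−1}. Then: (i) PS_θ(μ1, μ2) = 0 if and only if μ1 = μ2; (ii) PS_θ(μ1, μ2) = PS_θ(μ2, μ1); (iii) PS_θ(μ1, μ2) ≥ W_2(μ1, μ2). -/
open MeasureTheory Filter Topology ProbabilityTheory
open scoped ENNReal RealInnerProductSpace Classical

noncomputable section

/-- Euclidean space ℝ^d. -/
abbrev Euc (d : ℕ) : Type := EuclideanSpace ℝ (Fin d)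

/-- `P2` : Borel probability measures with finite second moment. -/
def P2 {E : Type*} [NormedAddCommGroup E] [MeasurableSpace E] : Set (Measure E) :=
  {μ | IsProbabilityMeasure μ ∧ Integrable (fun x => ‖x‖ ^ 2) μ}

/-- Couplings between two measures. -/
def Coupling {E F : Type*} [MeasurableSpace E] [MeasurableSpace F]
    (μ : Measure E) (ν : Measure F) : Set (Measure (E × F)) :=
  {π | IsProbabilityMeasure π ∧ π.map Prod.fst = μ ∧ π.map Prod.snd = ν}

/-- Quadratic transport cost of a plan. -/
def tCost {E : Type*} [NormedAddCommGroup E] [MeasurableSpace E]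
    (π : Measure (E × E)) : ℝ :=
  ∫ p, ‖p.1 - p.2‖ ^ 2 ∂π

/-- Squared 2-Wasserstein distance. -/
def W2sq {E : Type*} [NormedAddCommGroup E] [MeasurableSpace E] (μ ν : Measure E) : ℝ :=
  sInf (tCost '' Coupling μ ν)

/-- 2-Wasserstein distance. -/
def W2 {E : Type*} [NormedAddCommGroup E] [MeasurableSpace E] (μ ν : Measure E) : ℝ :=
  Real.sqrt (W2sq μ ν)

/-- Optimal transport plans for the quadratic cost. -/
def OptPlan {E : Type*} [NormedAddCommGroup E] [MeasurableSpace E]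
    (μ ν : Measure E) : Set (Measure (E × E)) :=
  {π | π ∈ Coupling μ ν ∧ tCost π = W2sq μ ν}

/-- `Gamma ν μ1 μ2` : probability measures on `E × E × E` whose (1,2)-marginal is an optimal
plan between `ν` and `μ1` and whose (1,3)-marginal is an optimal plan between `ν` and `μ2`. -/
def Gamma {E : Type*} [NormedAddCommGroup E] [MeasurableSpace E]
    (ν μ1 μ2 : Measure E) : Set (Measure (E × E × E)) :=
  {ρ | IsProbabilityMeasure ρ ∧
    ρ.map (fun p => (p.1, p.2.1)) ∈ OptPlan ν μ1 ∧
    ρ.map (fun p => (p.1, p.2.2)) ∈ OptPlan ν μ2}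

/-- Cost `∫ ‖x1 − x2‖² dρ(y, x1, x2)` of a 3-plan. -/
def pivotCost {E : Type*} [NormedAddCommGroup E] [MeasurableSpace E]
    (ρ : Measure (E × E × E)) : ℝ :=
  ∫ p, ‖p.2.1 - p.2.2‖ ^ 2 ∂ρ

/-- Squared ν-based Wasserstein discrepancy. -/
def Wnusq {E : Type*} [NormedAddCommGroup E] [MeasurableSpace E]
    (ν μ1 μ2 : Measure E) : ℝ :=
  sInf (pivotCost '' Gamma ν μ1 μ2)

/-- ν-based Wasserstein discrepancy. -/
def Wnu {E : Type*} [NormedAddCommGroup E] [MeasurableSpace E]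
    (ν μ1 μ2 : Measure E) : ℝ :=
  Real.sqrt (Wnusq ν μ1 μ2)

/-- Weak convergence of a sequence of measures (against bounded continuous functions). -/
def WeakConv {E : Type*} [MeasurableSpace E] [TopologicalSpace E]
    (μs : ℕ → Measure E) (μ : Measure E) : Prop :=
  ∀ f : BoundedContinuousFunction E ℝ,
    Tendsto (fun n => ∫ x, f x ∂(μs n)) atTop (𝓝 (∫ x, f x ∂μ))

/-- Quantile function (pseudo-inverse c.d.f.) of a measure on ℝ. -/
def quantile (ν : Measure ℝ) (t : ℝ) : ℝ :=
  sInf {s : ℝ | ENNReal.ofReal t ≤ ν (Set.Iic s)}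

/-- Pushforward of `μ` by the projection `P_θ : x ↦ ⟪θ, x⟫`. -/
def projLine {d : ℕ} (θ : Euc d) (μ : Measure (Euc d)) : Measure ℝ :=
  μ.map (fun x => ⟪θ, x⟫)

/-- `μ_θ[μ1, μ2]` : the (unique) Wasserstein mean of `Q_θ#μ1` and `Q_θ#μ2`, given by the
explicit quantile formula `[(½ F_{ν1}^{[-1]} + ½ F_{ν2}^{[-1]})·θ]#L_{[0,1]}`. -/
def pivotMiddle {d : ℕ} (θ : Euc d) (μ1 μ2 : Measure (Euc d)) : Measure (Euc d) :=
  (volume.restrict (Set.Icc (0 : ℝ) 1)).map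
    (fun t => ((1 / 2) * quantile (projLine θ μ1) t
      + (1 / 2) * quantile (projLine θ μ2) t) • θ)

/-- Squared Pivot Sliced discrepancy. -/
def PSsq {d : ℕ} (θ : Euc d) (μ1 μ2 : Measure (Euc d)) : ℝ :=
  Wnusq (pivotMiddle θ μ1 μ2) μ1 μ2

/-- Pivot Sliced discrepancy. -/
def PS {d : ℕ} (θ : Euc d) (μ1 μ2 : Measure (Euc d)) : ℝ :=
  Real.sqrt (PSsq θ μ1 μ2)

/-- `π_θ[μ1, μ2]` : the unique optimal 1D plan between `P_θ#μ1` and `P_θ#μ2`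
(co-monotone quantile coupling). -/
def piTheta {d : ℕ} (θ : Euc d) (μ1 μ2 : Measure (Euc d)) : Measure (ℝ × ℝ) :=
  (volume.restrict (Set.Icc (0 : ℝ) 1)).map
    (fun t => (quantile (projLine θ μ1) t, quantile (projLine θ μ2) t))

/-- `Ω_θ(μ1, μ2)` : couplings of `μ1, μ2` whose projection by `(P_θ, P_θ)` is `π_θ[μ1, μ2]`. -/
def OmegaTheta {d : ℕ} (θ : Euc d) (μ1 μ2 : Measure (Euc d)) :
    Set (Measure (Euc d × Euc d)) :=
  {ω | ω ∈ Coupling μ1 μ2 ∧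
    ω.map (fun p => (⟪θ, p.1⟫, ⟪θ, p.2⟫)) = piTheta θ μ1 μ2}

/-- Squared constrained Wasserstein discrepancy `CW_θ²`. -/
def CWsq {d : ℕ} (θ : Euc d) (μ1 μ2 : Measure (Euc d)) : ℝ :=
  sInf (tCost '' OmegaTheta θ μ1 μ2)

/-- Wasserstein means: minimisers of `μ ↦ W₂²(μ1, μ) + W₂²(μ, μ2)` over `P2`. -/
def WMean {d : ℕ} (μ1 μ2 : Measure (Euc d)) : Set (Measure (Euc d)) :=
  {μ | μ ∈ (P2 : Set (Measure (Euc d))) ∧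
    ∀ μ' ∈ (P2 : Set (Measure (Euc d))),
      W2sq μ1 μ + W2sq μ μ2 ≤ W2sq μ1 μ' + W2sq μ' μ2}

/-- Uniform empirical measure `1/n ∑ δ_{x_i}`. -/
def empMeasure {d n : ℕ} (x : Fin n → Euc d) : Measure (Euc d) :=
  (n : ℝ≥0∞)⁻¹ • ∑ i, Measure.dirac (x i)

/-!
The discrepancy `PS θ` is the `ν`-based discrepancy `Wnu ν` for the pivot `ν = pivotMiddle θ μ1 μ2`,
which is symmetric in `μ1` and `μ2`, and every `Wnu ν` with `ν` in `P2` has the claimed properties.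
Indeed, forgetting the pivot coordinate turns an element of `Gamma ν μ1 μ2` into a coupling of `μ1`
and `μ2` of the same cost, whence `W2 ≤ Wnu ν`; separation then follows from that of `W2`, and
duplicating the second coordinate of an optimal plan between `ν` and `μ` gives `Wnu ν μ μ = 0`.
The infimum defining `Wnu ν` is over a nonempty set because optimal plans exist (couplings form a
weakly compact set on which the cost is lower semicontinuous) and can be glued along `ν`.
-/

section Quantile

/-- The endpoints are excluded because there the set defining `quantile ν t` can be unbounded below
(`t = 0`) or empty (`t = 1`), so that `sInf` takes its junk value. -/
lemma quantile_le_iff (ν : Measure ℝ) [IsProbabilityMeasure ν] {t : ℝ}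
    (ht : t ∈ Set.Ioo (0 : ℝ) 1) {s : ℝ} : quantile ν t ≤ s ↔ t ≤ cdf ν s := by
  have quantile_eq : quantile ν t = sInf {s | t ≤ cdf ν s} := by
    simp only [quantile, ← ofReal_cdf, ENNReal.ofReal_le_ofReal_iff (cdf_nonneg ν _)]
  have nonempty : {s | t ≤ cdf ν s}.Nonempty :=
    ((tendsto_cdf_atTop ν).eventually_const_le ht.2).exists
  have bddBelow : BddBelow {s | t ≤ cdf ν s} := by
    obtain ⟨x, hx⟩ := ((tendsto_cdf_atBot ν).eventually_lt_const ht.1).exists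
    exact ⟨x, fun y hy => ((monotone_cdf ν).reflect_lt (hx.trans_le hy)).le⟩
  rw [quantile_eq]
  refine ⟨fun h => ?_, fun h => csInf_le bddBelow h⟩
  have right_limit : Tendsto (cdf ν) (𝓝[>] s) (𝓝 (cdf ν s)) :=
    ((cdf ν).right_continuous s).tendsto.mono_left (nhdsWithin_mono _ Set.Ioi_subset_Ici_self)
  refine ge_of_tendsto right_limit ?_
  filter_upwards [self_mem_nhdsWithin] with u (hu : s < u)
  obtain ⟨v, hv, hvu⟩ := exists_lt_of_csInf_lt nonempty (h.trans_lt hu)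
  exact hv.trans (monotone_cdf ν hvu.le)

lemma monotoneOn_quantile (ν : Measure ℝ) [IsProbabilityMeasure ν] :
    MonotoneOn (quantile ν) (Set.Ioo 0 1) := fun _ ha _ hb hab =>
  (quantile_le_iff ν ha).2 (hab.trans ((quantile_le_iff ν hb).1 le_rfl))

lemma restrict_Icc_eq_restrict_Ioo :
    (volume : Measure ℝ).restrict (Set.Icc 0 1) = volume.restrict (Set.Ioo 0 1) :=
  Measure.restrict_congr_set Ioo_ae_eq_Icc.symm

instance isProbabilityMeasure_restrict_Icc :
    IsProbabilityMeasure ((volume : Measure ℝ).restrict (Set.Icc 0 1)) :=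
  ⟨by simp⟩

lemma aemeasurable_quantile (ν : Measure ℝ) [IsProbabilityMeasure ν] :
    AEMeasurable (quantile ν) (volume.restrict (Set.Icc 0 1)) := by
  rw [restrict_Icc_eq_restrict_Ioo]
  exact aemeasurable_restrict_of_monotoneOn measurableSet_Ioo (monotoneOn_quantile ν)

lemma map_quantile (ν : Measure ℝ) [IsProbabilityMeasure ν] :
    (volume.restrict (Set.Icc 0 1)).map (quantile ν) = ν := by
  have := Measure.isProbabilityMeasure_map (aemeasurable_quantile ν)
  refine Measure.ext_of_Iic _ _ fun s => ?_
  have preimage_ae_eq :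
      quantile ν ⁻¹' Set.Iic s =ᵐ[volume.restrict (Set.Icc 0 1)] Set.Iic (cdf ν s) := by
    rw [restrict_Icc_eq_restrict_Ioo]
    filter_upwards [ae_restrict_mem measurableSet_Ioo] with t ht
    exact propext (quantile_le_iff ν ht)
  calc (volume.restrict (Set.Icc 0 1)).map (quantile ν) (Set.Iic s)
      = volume.restrict (Set.Icc 0 1) (Set.Iic (cdf ν s)) := by
        rw [Measure.map_apply_of_aemeasurable (aemeasurable_quantile ν) measurableSet_Iic,
          measure_congr preimage_ae_eq]
    _ = volume (Set.Icc 0 (cdf ν s)) := by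
        rw [Measure.restrict_apply measurableSet_Iic, Set.inter_comm, ← Set.Ici_inter_Iic,
          Set.inter_assoc, Set.Iic_inter_Iic, inf_eq_right.2 (cdf_le_one ν s), Set.Ici_inter_Iic]
    _ = ν (Set.Iic s) := by rw [Real.volume_Icc, sub_zero, ofReal_cdf]

lemma memLp_quantile (ν : Measure ℝ) [IsProbabilityMeasure ν] {p : ℝ≥0∞} (hν : MemLp id p ν) :
    MemLp (quantile ν) p (volume.restrict (Set.Icc 0 1)) := by
  rw [← map_quantile ν] at hν
  exact hν.comp_of_map (aemeasurable_quantile ν)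

end Quantile

section Coupling

variable {X Y Z : Type*} [MeasurableSpace X] [MeasurableSpace Y] [MeasurableSpace Z]

lemma prod_mem_coupling (μ : Measure X) (ν : Measure Y) [IsProbabilityMeasure μ]
    [IsProbabilityMeasure ν] : μ.prod ν ∈ Coupling μ ν :=
  ⟨inferInstance, by simp [Measure.map_fst_prod], by simp [Measure.map_snd_prod]⟩

lemma exists_glue_of_fst_eq [StandardBorelSpace Y] [Nonempty Y] [StandardBorelSpace Z] [Nonempty Z]
    (π₁ : Measure (X × Y)) (π₂ : Measure (X × Z)) [IsFiniteMeasure π₁] [IsFiniteMeasure π₂]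
    (h : π₁.fst = π₂.fst) :
    ∃ ρ : Measure (X × Y × Z),
      ρ.map (fun p => (p.1, p.2.1)) = π₁ ∧ ρ.map (fun p => (p.1, p.2.2)) = π₂ := by
  let κ := π₁.condKernel ×ₖ π₂.condKernel
  refine ⟨π₁.fst ⊗ₘ κ, ?_, ?_⟩
  · calc (π₁.fst ⊗ₘ κ).map (Prod.map id Prod.fst)
        = π₁.fst ⊗ₘ π₁.condKernel := by
          rw [← Measure.compProd_map measurable_fst, ← Kernel.fst_eq, Kernel.fst_prod]
      _ = π₁ := π₁.disintegrate _
  · calc (π₁.fst ⊗ₘ κ).map (Prod.map id Prod.snd)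
        = π₂.fst ⊗ₘ π₂.condKernel := by
          rw [← Measure.compProd_map measurable_snd, ← Kernel.snd_eq, Kernel.snd_prod, h]
      _ = π₂ := π₂.disintegrate _

lemma lowerSemicontinuous_lintegral [TopologicalSpace X] [OpensMeasurableSpace X]
    {c : X → ℝ≥0∞} (hc : Continuous c) :
    LowerSemicontinuous fun P : ProbabilityMeasure X => ∫⁻ x, c x ∂(P : Measure X) := by
  have exists_truncation (n : ℕ) :
      ∃ f : BoundedContinuousFunction X NNReal, ∀ x, (f x : ℝ≥0∞) = min (c x) n := by
    have ne_top (x : X) : min (c x) n ≠ ⊤ := ne_top_of_le_ne_top (by simp) (min_le_right _ _)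
    have mem_Icc (x : X) : ((min (c x) n).toNNReal : ℝ) ∈ Set.Icc (0 : ℝ) n :=
      ⟨NNReal.coe_nonneg _, ENNReal.toReal_le_of_le_ofReal n.cast_nonneg (by simp)⟩
    refine ⟨.mkOfBound ⟨fun x => (min (c x) n).toNNReal, ?_⟩ (n - 0) fun x y => ?_, fun x => ?_⟩
    · exact ENNReal.continuousOn_toNNReal.comp_continuous (by fun_prop) ne_top
    · exact Real.dist_le_of_mem_Icc (mem_Icc x) (mem_Icc y)
    · exact ENNReal.coe_toNNReal (ne_top x)
  choose f hf using exists_truncation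
  have lintegral_eq (P : ProbabilityMeasure X) :
      ∫⁻ x, c x ∂(P : Measure X) = ⨆ n, ∫⁻ x, f n x ∂(P : Measure X) := by
    rw [← lintegral_iSup (fun n => (f n).continuous.measurable.coe_nnreal_ennreal)]
    · simp only [hf, ← inf_iSup_eq, ENNReal.iSup_natCast, inf_top_eq]
    · intro m n hmn x
      simp only [hf]
      gcongr
  simp only [lintegral_eq]
  exact lowerSemicontinuous_iSup fun n =>
    (ProbabilityMeasure.continuous_lintegral_boundedContinuousFunction (f n)).lowerSemicontinuous

variable [TopologicalSpace X] [PolishSpace X] [BorelSpace X]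
  [TopologicalSpace Y] [PolishSpace Y] [BorelSpace Y]

lemma isClosed_setOf_mem_coupling (μ : Measure X) (ν : Measure Y) [IsProbabilityMeasure μ]
    [IsProbabilityMeasure ν] :
    IsClosed {P : ProbabilityMeasure (X × Y) | (P : Measure (X × Y)) ∈ Coupling μ ν} := by
  have eq_inter : {P : ProbabilityMeasure (X × Y) | (P : Measure (X × Y)) ∈ Coupling μ ν} =
      {P | P.map measurable_fst.aemeasurable = ⟨μ, inferInstance⟩} ∩
      {P | P.map measurable_snd.aemeasurable = ⟨ν, inferInstance⟩} := by
    ext P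
    exact ⟨fun h => ⟨Subtype.ext h.2.1, Subtype.ext h.2.2⟩,
      fun h => ⟨P.2, congrArg Subtype.val h.1, congrArg Subtype.val h.2⟩⟩
  rw [eq_inter]
  exact (isClosed_eq (ProbabilityMeasure.continuous_map continuous_fst) continuous_const).inter
    (isClosed_eq (ProbabilityMeasure.continuous_map continuous_snd) continuous_const)

lemma isTightMeasureSet_coupling (μ : Measure X) (ν : Measure Y) [IsFiniteMeasure μ]
    [IsFiniteMeasure ν] : IsTightMeasureSet (Coupling μ ν) := by
  refine .prodMk (isTightMeasureSet_singleton (μ := μ) |>.subset ?_)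
    (isTightMeasureSet_singleton (μ := ν) |>.subset ?_)
  · exact Set.image_subset_iff.2 fun _ hπ => hπ.2.1
  · exact Set.image_subset_iff.2 fun _ hπ => hπ.2.2

lemma isCompact_setOf_mem_coupling (μ : Measure X) (ν : Measure Y) [IsProbabilityMeasure μ]
    [IsProbabilityMeasure ν] :
    IsCompact {P : ProbabilityMeasure (X × Y) | (P : Measure (X × Y)) ∈ Coupling μ ν} := by
  rw [← (isClosed_setOf_mem_coupling μ ν).closure_eq]
  refine isCompact_closure_of_isTightMeasureSet ((isTightMeasureSet_coupling μ ν).subset ?_)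
  rintro _ ⟨P, hP, rfl⟩
  exact hP

theorem exists_coupling_lintegral_le (μ : Measure X) (ν : Measure Y) [IsProbabilityMeasure μ]
    [IsProbabilityMeasure ν] {c : X × Y → ℝ≥0∞} (hc : Continuous c) :
    ∃ π ∈ Coupling μ ν, ∀ π' ∈ Coupling μ ν, ∫⁻ p, c p ∂π ≤ ∫⁻ p, c p ∂π' := by
  obtain ⟨P, hP, isMin⟩ := (lowerSemicontinuous_lintegral hc).lowerSemicontinuousOn _
    |>.exists_isMinOn ⟨⟨μ.prod ν, inferInstance⟩, prod_mem_coupling μ ν⟩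
      (isCompact_setOf_mem_coupling μ ν)
  exact ⟨P, hP, fun π' hπ' => isMin (show ⟨π', hπ'.1⟩ ∈ _ from hπ')⟩

end Coupling

section Wasserstein

variable {E : Type*} [NormedAddCommGroup E] [MeasurableSpace E]

lemma tCost_nonneg (π : Measure (E × E)) : 0 ≤ tCost π :=
  integral_nonneg fun _ => by positivity

lemma pivotCost_nonneg (ρ : Measure (E × E × E)) : 0 ≤ pivotCost ρ :=
  integral_nonneg fun _ => by positivity

lemma W2sq_le_tCost {μ ν : Measure E} {π : Measure (E × E)} (hπ : π ∈ Coupling μ ν) :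
    W2sq μ ν ≤ tCost π :=
  csInf_le ⟨0, Set.forall_mem_image.2 fun π _ => tCost_nonneg π⟩ (Set.mem_image_of_mem _ hπ)

lemma W2sq_nonneg (μ ν : Measure E) : 0 ≤ W2sq μ ν :=
  Real.sInf_nonneg (Set.forall_mem_image.2 fun π _ => tCost_nonneg π)

lemma map_snd_mem_coupling {ν μ1 μ2 : Measure E} {ρ : Measure (E × E × E)}
    (hρ : ρ ∈ Gamma ν μ1 μ2) : ρ.map Prod.snd ∈ Coupling μ1 μ2 := by
  obtain ⟨_, ⟨⟨-, -, h1⟩, -⟩, ⟨⟨-, -, h2⟩, -⟩⟩ := hρ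
  refine ⟨Measure.isProbabilityMeasure_map (by fun_prop), ?_, ?_⟩
  · rwa [Measure.map_map (by fun_prop) (by fun_prop)] at h1 ⊢
  · rwa [Measure.map_map (by fun_prop) (by fun_prop)] at h2 ⊢

lemma memLp_sub_of_mem_coupling {μ ν : Measure E} {p : ℝ≥0∞} (hμ : MemLp id p μ)
    (hν : MemLp id p ν) {π : Measure (E × E)} (hπ : π ∈ Coupling μ ν) :
    MemLp (fun x => x.1 - x.2) p π := by
  obtain ⟨-, rfl, rfl⟩ := hπ
  exact (hμ.comp_of_map (by fun_prop)).sub (hν.comp_of_map (by fun_prop))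

variable [BorelSpace E] [SecondCountableTopology E]

lemma mem_P2_iff_memLp {μ : Measure E} : μ ∈ P2 ↔ IsProbabilityMeasure μ ∧ MemLp id 2 μ :=
  and_congr_right fun _ => (memLp_two_iff_integrable_sq_norm aestronglyMeasurable_id).symm

lemma map_mem_P2 {X : Type*} [MeasurableSpace X] {P : Measure X} [IsProbabilityMeasure P]
    {f : X → E} (hf : MemLp f 2 P) : P.map f ∈ P2 := by
  have aemeasurable := hf.aestronglyMeasurable.aemeasurable
  exact mem_P2_iff_memLp.2 ⟨Measure.isProbabilityMeasure_map aemeasurable,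
    (memLp_map_measure_iff aestronglyMeasurable_id aemeasurable).2 hf⟩

lemma integrable_sq_norm_sub {μ ν : Measure E} (hμ : μ ∈ P2) (hν : ν ∈ P2)
    {π : Measure (E × E)} (hπ : π ∈ Coupling μ ν) :
    Integrable (fun p => ‖p.1 - p.2‖ ^ 2) π :=
  (memLp_sub_of_mem_coupling (mem_P2_iff_memLp.1 hμ).2 (mem_P2_iff_memLp.1 hν).2 hπ
    ).integrable_norm_pow two_ne_zero

lemma ofReal_tCost {μ ν : Measure E} (hμ : μ ∈ P2) (hν : ν ∈ P2)
    {π : Measure (E × E)} (hπ : π ∈ Coupling μ ν) :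
    ENNReal.ofReal (tCost π) = ∫⁻ p, ‖p.1 - p.2‖ₑ ^ 2 ∂π := by
  simpa [tCost, enorm_pow] using
    ofReal_integral_norm_eq_lintegral_enorm (integrable_sq_norm_sub hμ hν hπ)

lemma tCost_map_snd (ρ : Measure (E × E × E)) : tCost (ρ.map Prod.snd) = pivotCost ρ :=
  integral_map measurable_snd.aemeasurable
    (by fun_prop : Measurable fun p : E × E => ‖p.1 - p.2‖ ^ 2).aestronglyMeasurable

lemma pivotCost_map {X : Type*} [MeasurableSpace X] (P : Measure X) {f : X → E × E × E}
    (hf : Measurable f) :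
    pivotCost (P.map f) = ∫ x, ‖(f x).2.1 - (f x).2.2‖ ^ 2 ∂P :=
  integral_map hf.aemeasurable
    (by fun_prop : Measurable fun p : E × E × E => ‖p.2.1 - p.2.2‖ ^ 2).aestronglyMeasurable

lemma image_pivotCost_Gamma_subset_swap (ν μ1 μ2 : Measure E) :
    pivotCost '' Gamma ν μ1 μ2 ⊆ pivotCost '' Gamma ν μ2 μ1 := by
  rintro _ ⟨ρ, ⟨_, h1, h2⟩, rfl⟩
  have measurable_swap : Measurable fun p : E × E × E => (p.1, p.2.2, p.2.1) := by fun_prop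
  refine ⟨ρ.map fun p => (p.1, p.2.2, p.2.1),
    ⟨Measure.isProbabilityMeasure_map (by fun_prop), ?_, ?_⟩, ?_⟩
  · rwa [Measure.map_map (by fun_prop) measurable_swap]
  · rwa [Measure.map_map (by fun_prop) measurable_swap]
  · rw [pivotCost_map ρ measurable_swap]
    simp only [pivotCost, norm_sub_rev]

theorem Wnu_comm (ν μ1 μ2 : Measure E) : Wnu ν μ1 μ2 = Wnu ν μ2 μ1 := by
  simp only [Wnu, Wnusq, (image_pivotCost_Gamma_subset_swap ν μ1 μ2).antisymm
    (image_pivotCost_Gamma_subset_swap ν μ2 μ1)]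

variable [CompleteSpace E]

theorem optPlan_nonempty {μ ν : Measure E} (hμ : μ ∈ P2) (hν : ν ∈ P2) :
    (OptPlan μ ν).Nonempty := by
  have := hμ.1
  have := hν.1
  obtain ⟨π, hπ, lintegral_le⟩ := exists_coupling_lintegral_le μ ν
    (c := fun p : E × E => ‖p.1 - p.2‖ₑ ^ 2) (by fun_prop)
  refine ⟨π, hπ, Eq.symm (IsLeast.csInf_eq ⟨Set.mem_image_of_mem _ hπ, ?_⟩)⟩
  rintro _ ⟨π', hπ', rfl⟩
  rw [← ENNReal.ofReal_le_ofReal_iff (tCost_nonneg π'), ofReal_tCost hμ hν hπ,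
    ofReal_tCost hμ hν hπ']
  exact lintegral_le π' hπ'

theorem eq_of_W2_eq_zero {μ ν : Measure E} (hμ : μ ∈ P2) (hν : ν ∈ P2) (h : W2 μ ν = 0) :
    μ = ν := by
  obtain ⟨π, hπ, cost_eq⟩ := optPlan_nonempty hμ hν
  have cost_eq_zero : tCost π = 0 := by
    rw [cost_eq, ← Real.sqrt_eq_zero (W2sq_nonneg μ ν)]
    exact h
  have fst_ae_eq_snd : Prod.fst =ᵐ[π] Prod.snd := by
    have ae_eq_zero := (integral_eq_zero_iff_of_nonneg (fun _ => by positivity)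
      (integrable_sq_norm_sub hμ hν hπ)).1 cost_eq_zero
    filter_upwards [ae_eq_zero] with p hp
    exact sub_eq_zero.1 (norm_eq_zero.1 (pow_eq_zero_iff two_ne_zero |>.1 hp))
  rw [← hπ.2.1, ← hπ.2.2, Measure.map_congr fst_ae_eq_snd]

theorem gamma_nonempty {ν μ1 μ2 : Measure E} (hν : ν ∈ P2) (h1 : μ1 ∈ P2) (h2 : μ2 ∈ P2) :
    (Gamma ν μ1 μ2).Nonempty := by
  obtain ⟨π₁, hπ₁⟩ := optPlan_nonempty hν h1
  obtain ⟨π₂, hπ₂⟩ := optPlan_nonempty hν h2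
  have := hπ₁.1.1
  have := hπ₂.1.1
  obtain ⟨ρ, rfl, rfl⟩ := exists_glue_of_fst_eq π₁ π₂ (hπ₁.1.2.1.trans hπ₂.1.2.1.symm)
  exact ⟨ρ, Measure.isProbabilityMeasure_of_map fun p => (p.1, p.2.1), hπ₁, hπ₂⟩

theorem W2_le_Wnu {ν μ1 μ2 : Measure E} (hν : ν ∈ P2) (h1 : μ1 ∈ P2) (h2 : μ2 ∈ P2) :
    W2 μ1 μ2 ≤ Wnu ν μ1 μ2 := by
  refine Real.sqrt_le_sqrt (le_csInf ((gamma_nonempty hν h1 h2).image _) ?_)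
  rintro _ ⟨ρ, hρ, rfl⟩
  exact (W2sq_le_tCost (map_snd_mem_coupling hρ)).trans_eq (tCost_map_snd ρ)

theorem Wnu_self {ν μ : Measure E} (hν : ν ∈ P2) (hμ : μ ∈ P2) : Wnu ν μ μ = 0 := by
  obtain ⟨π, hπ⟩ := optPlan_nonempty hν hμ
  have := hπ.1.1
  have measurable_dup : Measurable fun p : E × E => (p.1, p.2, p.2) := by fun_prop
  have marginal_12 : (π.map fun p => (p.1, p.2, p.2)).map (fun p => (p.1, p.2.1)) = π :=
    (Measure.map_map (by fun_prop) measurable_dup).trans Measure.map_id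
  have marginal_13 : (π.map fun p => (p.1, p.2, p.2)).map (fun p => (p.1, p.2.2)) = π :=
    (Measure.map_map (by fun_prop) measurable_dup).trans Measure.map_id
  have dup_mem_gamma : (π.map fun p => (p.1, p.2, p.2)) ∈ Gamma ν μ μ :=
    ⟨Measure.isProbabilityMeasure_map (by fun_prop), marginal_12.symm ▸ hπ, marginal_13.symm ▸ hπ⟩
  have dup_cost : pivotCost (π.map fun p => (p.1, p.2, p.2)) = 0 := by
    simp [pivotCost_map π measurable_dup]
  have isLeast_zero : IsLeast (pivotCost '' Gamma ν μ μ) 0 :=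
    ⟨⟨_, dup_mem_gamma, dup_cost⟩, Set.forall_mem_image.2 fun ρ _ => pivotCost_nonneg ρ⟩
  rw [Wnu, Wnusq, isLeast_zero.csInf_eq, Real.sqrt_zero]

theorem Wnu_eq_zero_iff {ν μ1 μ2 : Measure E} (hν : ν ∈ P2) (h1 : μ1 ∈ P2) (h2 : μ2 ∈ P2) :
    Wnu ν μ1 μ2 = 0 ↔ μ1 = μ2 := by
  refine ⟨fun h => eq_of_W2_eq_zero h1 h2 ?_, ?_⟩
  · exact le_antisymm ((W2_le_Wnu hν h1 h2).trans_eq h) (Real.sqrt_nonneg _)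
  · rintro rfl
    exact Wnu_self hν h1

end Wasserstein

section Pivot

variable {d : ℕ}

lemma memLp_quantile_projLine (θ : Euc d) {μ : Measure (Euc d)} [IsProbabilityMeasure μ]
    {p : ℝ≥0∞} (hμ : MemLp id p μ) :
    MemLp (quantile (projLine θ μ)) p (volume.restrict (Set.Icc 0 1)) := by
  have : IsProbabilityMeasure (projLine θ μ) := Measure.isProbabilityMeasure_map (by fun_prop)
  exact memLp_quantile _
    ((memLp_map_measure_iff aestronglyMeasurable_id (by fun_prop)).2 (hμ.const_inner θ))

lemma pivotMiddle_mem_P2 (θ : Euc d) {μ1 μ2 : Measure (Euc d)} (h1 : μ1 ∈ P2) (h2 : μ2 ∈ P2) :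
    pivotMiddle θ μ1 μ2 ∈ P2 := by
  obtain ⟨_, memLp1⟩ := mem_P2_iff_memLp.1 h1
  obtain ⟨_, memLp2⟩ := mem_P2_iff_memLp.1 h2
  have memLp_average := ((memLp_quantile_projLine θ memLp1).const_mul (1 / 2)).add
    ((memLp_quantile_projLine θ memLp2).const_mul (1 / 2))
  exact map_mem_P2 ((ContinuousLinearMap.toSpanSingleton ℝ θ).comp_memLp' memLp_average)

lemma pivotMiddle_comm (θ : Euc d) (μ1 μ2 : Measure (Euc d)) :
    pivotMiddle θ μ1 μ2 = pivotMiddle θ μ2 μ1 := by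
  simp only [pivotMiddle, add_comm]

lemma PS_eq_Wnu (θ : Euc d) (μ1 μ2 : Measure (Euc d)) :
    PS θ μ1 μ2 = Wnu (pivotMiddle θ μ1 μ2) μ1 μ2 := rfl

theorem PS_semi_metric_general (θ : Euc d) {μ1 μ2 : Measure (Euc d)} (h1 : μ1 ∈ P2)
    (h2 : μ2 ∈ P2) :
    (PS θ μ1 μ2 = 0 ↔ μ1 = μ2) ∧ PS θ μ1 μ2 = PS θ μ2 μ1 ∧ W2 μ1 μ2 ≤ PS θ μ1 μ2 := by
  have pivot_mem := pivotMiddle_mem_P2 θ h1 h2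
  refine ⟨Wnu_eq_zero_iff pivot_mem h1 h2, ?_, W2_le_Wnu pivot_mem h1 h2⟩
  rw [PS_eq_Wnu, PS_eq_Wnu, pivotMiddle_comm, Wnu_comm]

end Pivot

/-- semi-metric properties of the Pivot Sliced discrepancy `PS_θ`:
separation, symmetry, and upper bound of `W₂`. -/
theorem PS_semi_metric {d : ℕ} (θ : Euc d) (hθ : ‖θ‖ = 1) (μ1 μ2 : Measure (Euc d))
    (h1 : μ1 ∈ (P2 : Set (Measure (Euc d)))) (h2 : μ2 ∈ (P2 : Set (Measure (Euc d)))) :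
    (PS θ μ1 μ2 = 0 ↔ μ1 = μ2) ∧
    PS θ μ1 μ2 = PS θ μ2 μ1 ∧
    W2 μ1 μ2 ≤ PS θ μ1 μ2 :=
  PS_semi_metric_general θ h1 h2

end
end

section
/- Let μ1, μ2, μ3 ∈ P_2(ℝ) with μ1 and μ2 atomless, and let ρ be a probability measure on ℝ³ with marginals μ1, μ2, μ3 such that its (1,2)-bimarginal lies in Π*(μ1, μ2) and its (1,3)-bimarginal lies in Π*(μ1, μ3). Then its (2,3)-bimarginal lies in Π*(μ2, μ3). -/
open MeasureTheory Filter Topology ProbabilityTheory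
open scoped ENNReal RealInnerProductSpace Classical

noncomputable section

/-!
On the line a plan is optimal iff it is comonotone: the events `{X ≤ s}` and `{Y ≤ t}` are nested
almost surely. An optimal plan is comonotone because exchanging the second coordinates of two
independent draws, wherever this lowers the cost, produces a competitor. Conversely `(X - Y)²` is
the area of a set of pairs of levels, so the cost is an integral of the probabilities of
`{X ≤ s} \ {Y ≤ t}` and `{Y ≤ s} \ {X ≤ t}`; a difference `U \ V` has probability at least
`P U - P V`, which is fixed by the marginals, with equality for nested events. Finally,
comonotonicity passes through an atomless `X`: each event `{Y ≤ s}` of intermediate probability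
agrees almost surely with some `{X ≤ a}`, and the latter is nested with every `{Z ≤ t}`.
-/

section SetsUpToNull

variable {Ω : Type*} [MeasurableSpace Ω] {P : Measure Ω} {U V : Set Ω}

lemma measure_sdiff_eq_tsub_of_ae_nested [IsFiniteMeasure P] (hV : NullMeasurableSet V P)
    (h : U ≤ᵐ[P] V ∨ V ≤ᵐ[P] U) : P (U \ V) = P U - P V := by
  rcases h with hUV | hVU
  · rw [ae_le_set.mp hUV, tsub_eq_zero_of_le (measure_mono_ae hUV)]
  · rw [measure_sdiff' U hV (measure_ne_top P V),
      measure_congr (union_ae_eq_left_iff_ae_subset.mpr hVU)]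

lemma measure_sdiff_le_of_ae_nested {Ω' : Type*} [MeasurableSpace Ω'] {P' : Measure Ω'}
    {U' V' : Set Ω'} [IsFiniteMeasure P] (hVm : NullMeasurableSet V P)
    (h : U ≤ᵐ[P] V ∨ V ≤ᵐ[P] U) (hU : P U = P' U') (hV : P V = P' V') :
    P (U \ V) ≤ P' (U' \ V') := by
  rw [measure_sdiff_eq_tsub_of_ae_nested hVm h, hU, hV]
  exact le_measure_sdiff

lemma ae_eq_of_ae_nested_of_measure_eq [IsFiniteMeasure P] (hU : NullMeasurableSet U P)
    (hV : NullMeasurableSet V P) (h : U ≤ᵐ[P] V ∨ V ≤ᵐ[P] U) (hUV : P U = P V) : U =ᵐ[P] V :=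
  h.elim
    (fun h ↦ ae_eq_of_ae_subset_of_measure_ge h hUV.ge hU (measure_ne_top P V))
    (fun h ↦ (ae_eq_of_ae_subset_of_measure_ge h hUV.le hV (measure_ne_top P U)).symm)

lemma measurePreserving_piecewise {Ω' : Type*} [MeasurableSpace Ω'] {Q : Measure Ω'}
    {f g : Ω → Ω'} (hf : MeasurePreserving f P Q) (hg : MeasurePreserving g P Q)
    {S : Set Ω} {T : Set Ω'} (hT : MeasurableSet T) (hfT : f ⁻¹' T = S) (hgT : g ⁻¹' T = S) :
    MeasurePreserving (S.piecewise f g) P Q := by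
  have hS : MeasurableSet S := hfT ▸ hf.measurable hT
  have hm : Measurable (S.piecewise f g) := hf.measurable.piecewise hS hg.measurable
  refine ⟨hm, Measure.ext fun B hB ↦ ?_⟩
  calc P.map (S.piecewise f g) B
      = P (S.piecewise f g ⁻¹' B ∩ S) + P (S.piecewise f g ⁻¹' B \ S) := by
        rw [Measure.map_apply hm hB, measure_inter_add_sdiff _ hS]
    _ = P (f ⁻¹' (B ∩ T)) + P (g ⁻¹' (B \ T)) := by
        rw [Set.piecewise_preimage, Set.ite_inter_self, Set.ite_sdiff_self, Set.preimage_inter,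
          Set.preimage_sdiff, hfT, hgT]
    _ = Q B := by
        rw [hf.measure_preimage (hB.inter hT).nullMeasurableSet,
          hg.measure_preimage (hB.diff hT).nullMeasurableSet, measure_inter_add_sdiff _ hT]

end SetsUpToNull

section AtomlessCdf

variable (μ : Measure ℝ) [IsProbabilityMeasure μ] [NullSingletonClass μ]

lemma continuous_cdf : Continuous (cdf μ) := by
  refine continuous_iff_continuousAt.mpr fun x ↦ ?_
  have hjump : ENNReal.ofReal (cdf μ x - Function.leftLim (cdf μ) x) = 0 := by
    rw [← StieltjesFunction.measure_singleton, measure_cdf, measure_singleton]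
  rw [(monotone_cdf μ).continuousAt_iff_leftLim_eq_rightLim, StieltjesFunction.rightLim_eq]
  exact le_antisymm ((monotone_cdf μ).leftLim_le le_rfl)
    (sub_nonpos.mp (ENNReal.ofReal_eq_zero.mp hjump))

lemma exists_measure_Iic_eq {c : ℝ≥0∞} (hc₀ : c ≠ 0) (hc₁ : c < 1) :
    ∃ a, μ (Set.Iic a) = c := by
  have hc_top : c ≠ ∞ := hc₁.ne_top
  have hc : c.toReal ∈ Set.Ioo (0 : ℝ) 1 :=
    ⟨ENNReal.toReal_pos hc₀ hc_top, by
      simpa using (ENNReal.toReal_lt_toReal hc_top ENNReal.one_ne_top).mpr hc₁⟩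
  obtain ⟨a, -, ha⟩ := isPreconnected_univ.intermediate_value_Ioo (by simp) (by simp)
    (continuous_cdf μ).continuousOn (tendsto_cdf_atBot μ) (tendsto_cdf_atTop μ) hc
  exact ⟨a, by rw [← ofReal_cdf, ha, ENNReal.ofReal_toReal hc_top]⟩

end AtomlessCdf

section Comonotone

variable {Ω α β γ : Type*} [MeasurableSpace Ω]

/-- Comonotonicity of two random variables: any two of their sublevel events are nested up to
null sets. A plan `π` on a product is comonotone when `Comonotone π Prod.fst Prod.snd`. -/
def Comonotone [Preorder α] [Preorder β] (P : Measure Ω) (X : Ω → α) (Y : Ω → β) : Prop :=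
  ∀ s t, X ⁻¹' Set.Iic s ≤ᵐ[P] Y ⁻¹' Set.Iic t ∨ Y ⁻¹' Set.Iic t ≤ᵐ[P] X ⁻¹' Set.Iic s

lemma comonotone_map_iff {Ω' : Type*} [MeasurableSpace Ω'] {P : Measure Ω} {f : Ω → Ω'}
    [TopologicalSpace α] [Preorder α] [ClosedIicTopology α] [MeasurableSpace α]
    [OpensMeasurableSpace α] [TopologicalSpace β] [Preorder β] [ClosedIicTopology β]
    [MeasurableSpace β] [OpensMeasurableSpace β] {X : Ω' → α} {Y : Ω' → β}
    (hf : AEMeasurable f P) (hX : Measurable X) (hY : Measurable Y) :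
    Comonotone (P.map f) X Y ↔ Comonotone P (X ∘ f) (Y ∘ f) := by
  have hXm (s : α) : MeasurableSet (X ⁻¹' Set.Iic s) := hX measurableSet_Iic
  have hYm (t : β) : MeasurableSet (Y ⁻¹' Set.Iic t) := hY measurableSet_Iic
  refine forall₂_congr fun s t ↦ ?_
  simp only [ae_le_set, Measure.map_apply_of_aemeasurable hf ((hXm s).diff (hYm t)),
    Measure.map_apply_of_aemeasurable hf ((hYm t).diff (hXm s)), Set.preimage_sdiff,
    Set.preimage_comp]

lemma Comonotone.of_common_left {P : Measure Ω} [IsProbabilityMeasure P] {X : Ω → ℝ}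
    [NullSingletonClass (P.map X)] [TopologicalSpace β] [Preorder β] [ClosedIicTopology β]
    [MeasurableSpace β] [OpensMeasurableSpace β] [Preorder γ] {Y : Ω → β} {Z : Ω → γ}
    (hX : AEMeasurable X P) (hY : AEMeasurable Y P)
    (hXY : Comonotone P X Y) (hXZ : Comonotone P X Z) : Comonotone P Y Z := by
  intro s t
  have hYs : NullMeasurableSet (Y ⁻¹' Set.Iic s) P := hY.nullMeasurable measurableSet_Iic
  rcases eq_or_ne (P (Y ⁻¹' Set.Iic s)) 0 with h₀ | h₀
  · exact .inl (ae_le_set.mpr (measure_mono_null Set.sdiff_subset h₀))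
  rcases prob_le_one.eq_or_lt (a := P (Y ⁻¹' Set.Iic s)) with h₁ | h₁
  · have hall : ∀ᵐ ω ∂P, ω ∈ Y ⁻¹' Set.Iic s := (mem_ae_iff_prob_eq_one₀ hYs).mpr h₁
    exact .inr (hall.mono fun _ hω _ ↦ hω)
  have := Measure.isProbabilityMeasure_map hX
  obtain ⟨a, ha⟩ := exists_measure_Iic_eq (P.map X) h₀ h₁
  rw [Measure.map_apply_of_aemeasurable hX measurableSet_Iic] at ha
  have hXaYs : X ⁻¹' Set.Iic a =ᵐ[P] Y ⁻¹' Set.Iic s :=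
    ae_eq_of_ae_nested_of_measure_eq (hX.nullMeasurable measurableSet_Iic) hYs (hXY a s) ha
  exact (hXZ a t).imp hXaYs.symm.le.trans (·.trans hXaYs.le)

end Comonotone

section Couplings

variable {E F : Type*} [MeasurableSpace E] [MeasurableSpace F] {μ : Measure E} {ν : Measure F}

lemma map_prodMk_mem_coupling_iff {Ω : Type*} [MeasurableSpace Ω] {P : Measure Ω}
    [IsProbabilityMeasure P] {X : Ω → E} {Y : Ω → F} (hX : Measurable X) (hY : Measurable Y) :
    P.map (fun ω ↦ (X ω, Y ω)) ∈ Coupling μ ν ↔ P.map X = μ ∧ P.map Y = ν := by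
  have hprob : IsProbabilityMeasure (P.map fun ω ↦ (X ω, Y ω)) :=
    Measure.isProbabilityMeasure_map (hX.prodMk hY).aemeasurable
  have hfst : (P.map fun ω ↦ (X ω, Y ω)).map Prod.fst = P.map X :=
    Measure.map_map measurable_fst (hX.prodMk hY)
  have hsnd : (P.map fun ω ↦ (X ω, Y ω)).map Prod.snd = P.map Y :=
    Measure.map_map measurable_snd (hX.prodMk hY)
  rw [Coupling, Set.mem_ofPred_eq, hfst, hsnd, and_iff_right hprob]

lemma measurePreserving_fst_of_mem_coupling {π : Measure (E × F)} (hπ : π ∈ Coupling μ ν) :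
    MeasurePreserving Prod.fst π μ :=
  ⟨measurable_fst, hπ.2.1⟩

lemma measurePreserving_snd_of_mem_coupling {π : Measure (E × F)} (hπ : π ∈ Coupling μ ν) :
    MeasurePreserving Prod.snd π ν :=
  ⟨measurable_snd, hπ.2.2⟩

/-- The first of two pairs, with its second coordinate replaced by that of the other one when the
two pairs form an element of `S`. It rearranges a plan `π` when applied to two independent draws
from `π`. -/
def exchangeSnd (S : Set ((E × F) × (E × F))) (z : (E × F) × (E × F)) : E × F :=
  (z.1.1, (S.piecewise Prod.swap id z).1.2)

lemma measurable_exchangeSnd {S : Set ((E × F) × (E × F))} (hS : MeasurableSet S) :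
    Measurable (exchangeSnd S) :=
  (measurable_fst.comp measurable_fst).prodMk
    ((measurable_snd.comp measurable_fst).comp (measurable_swap.piecewise hS measurable_id))

lemma map_exchangeSnd_mem_coupling {π : Measure (E × F)} (hπ : π ∈ Coupling μ ν)
    {S : Set ((E × F) × (E × F))} (hS : MeasurableSet S) (hswap : Prod.swap ⁻¹' S = S) :
    (π.prod π).map (exchangeSnd S) ∈ Coupling μ ν := by
  have := hπ.1
  have hσ : MeasurePreserving (S.piecewise Prod.swap id) (π.prod π) (π.prod π) :=
    measurePreserving_piecewise Measure.measurePreserving_swap (.id _) hS hswap rfl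
  have hfst : MeasurePreserving (fun z ↦ z.1.1) (π.prod π) μ :=
    (measurePreserving_fst_of_mem_coupling hπ).comp measurePreserving_fst
  have hsnd : MeasurePreserving (fun z ↦ (S.piecewise Prod.swap id z).1.2) (π.prod π) ν :=
    (measurePreserving_snd_of_mem_coupling hπ).comp (measurePreserving_fst.comp hσ)
  exact (map_prodMk_mem_coupling_iff hfst.measurable hsnd.measurable).mpr
    ⟨hfst.map_eq, hsnd.map_eq⟩

end Couplings

section QuadraticCost

/-- The decrease of the total quadratic cost of two transported pairs `z.1`, `z.2` when their
second coordinates are exchanged. -/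
def exchangeGain {E : Type*} [NormedAddCommGroup E] (z : (E × E) × (E × E)) : ℝ :=
  ‖z.1.1 - z.1.2‖ ^ 2 + ‖z.2.1 - z.2.2‖ ^ 2 - (‖z.1.1 - z.2.2‖ ^ 2 + ‖z.2.1 - z.1.2‖ ^ 2)

lemma exchangeGain_swap {E : Type*} [NormedAddCommGroup E] (z : (E × E) × (E × E)) :
    exchangeGain z.swap = exchangeGain z := by
  simp only [exchangeGain, Prod.fst_swap, Prod.snd_swap]
  ring

lemma indicator_exchangeGain_eq_add_swap {E : Type*} [NormedAddCommGroup E]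
    {S : Set ((E × E) × (E × E))} (hswap : Prod.swap ⁻¹' S = S) (z : (E × E) × (E × E)) :
    S.indicator exchangeGain z =
      (‖z.1.1 - z.1.2‖ ^ 2 - ‖(exchangeSnd S z).1 - (exchangeSnd S z).2‖ ^ 2) +
      (‖z.swap.1.1 - z.swap.1.2‖ ^ 2 -
        ‖(exchangeSnd S z.swap).1 - (exchangeSnd S z.swap).2‖ ^ 2) := by
  have hmem : z.swap ∈ S ↔ z ∈ S := Set.ext_iff.mp hswap z
  by_cases hz : z ∈ S
  · rw [Set.indicator_of_mem hz, exchangeSnd, exchangeSnd, Set.piecewise_eq_of_mem _ _ _ hz,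
      Set.piecewise_eq_of_mem _ _ _ (hmem.mpr hz)]
    simp only [exchangeGain, Prod.fst_swap, Prod.snd_swap]
    ring
  · rw [Set.indicator_of_notMem hz, exchangeSnd, exchangeSnd, Set.piecewise_eq_of_notMem _ _ _ hz,
      Set.piecewise_eq_of_notMem _ _ _ (mt hmem.mp hz)]
    simp only [id, sub_self, add_zero]

variable {E : Type*} [NormedAddCommGroup E] [MeasurableSpace E] {μ ν : Measure E}
  {π : Measure (E × E)}

lemma mem_optPlan_iff :
    π ∈ OptPlan μ ν ↔ π ∈ Coupling μ ν ∧ ∀ π' ∈ Coupling μ ν, tCost π ≤ tCost π' := by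
  have hbdd : BddBelow (tCost '' Coupling μ ν) :=
    ⟨0, Set.forall_mem_image.mpr fun _ _ ↦ integral_nonneg fun _ ↦ by positivity⟩
  refine and_congr_right fun hπ ↦ ⟨fun h π' hπ' ↦ ?_, fun h ↦ le_antisymm ?_ ?_⟩
  · exact h.trans_le (csInf_le hbdd (Set.mem_image_of_mem _ hπ'))
  · exact le_csInf ⟨_, Set.mem_image_of_mem _ hπ⟩ (Set.forall_mem_image.mpr h)
  · exact csInf_le hbdd (Set.mem_image_of_mem _ hπ)

variable [BorelSpace E] [SecondCountableTopology E]

lemma integrable_norm_sub_sq_of_mem_coupling (hμ : μ ∈ (P2 : Set (Measure E)))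
    (hν : ν ∈ (P2 : Set (Measure E))) (hπ : π ∈ Coupling μ ν) :
    Integrable (fun p : E × E ↦ ‖p.1 - p.2‖ ^ 2) π := by
  have hfst : MemLp Prod.fst 2 π :=
    (memLp_two_iff_integrable_sq_norm measurable_fst.aestronglyMeasurable).mpr
      ((measurePreserving_fst_of_mem_coupling hπ).integrable_comp_of_integrable hμ.2)
  have hsnd : MemLp Prod.snd 2 π :=
    (memLp_two_iff_integrable_sq_norm measurable_snd.aestronglyMeasurable).mpr
      ((measurePreserving_snd_of_mem_coupling hπ).integrable_comp_of_integrable hν.2)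
  exact (memLp_two_iff_integrable_sq_norm (hfst.sub hsnd).1).mp (hfst.sub hsnd)

lemma measurable_exchangeGain : Measurable (exchangeGain (E := E)) := by
  unfold exchangeGain
  fun_prop

lemma integral_indicator_exchangeGain [IsProbabilityMeasure π] {S : Set ((E × E) × (E × E))}
    (hS : MeasurableSet S) (hswap : Prod.swap ⁻¹' S = S)
    (hπ : Integrable (fun p ↦ ‖p.1 - p.2‖ ^ 2) π)
    (hex : Integrable (fun p ↦ ‖p.1 - p.2‖ ^ 2) ((π.prod π).map (exchangeSnd S))) :
    Integrable (S.indicator exchangeGain) (π.prod π) ∧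
      ∫ z, S.indicator exchangeGain z ∂π.prod π
        = 2 * (tCost π - tCost ((π.prod π).map (exchangeSnd S))) := by
  set c : E × E → ℝ := fun p ↦ ‖p.1 - p.2‖ ^ 2
  set g : (E × E) × (E × E) → ℝ := fun z ↦ c z.1 - c (exchangeSnd S z)
  have hcm : Measurable c := by fun_prop
  have hem : Measurable (exchangeSnd S) := measurable_exchangeSnd hS
  have hint_fst : Integrable (fun z : (E × E) × (E × E) ↦ c z.1) (π.prod π) := hπ.comp_fst π
  have hint_ex : Integrable (fun z ↦ c (exchangeSnd S z)) (π.prod π) := hex.comp_measurable hem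
  have hg : Integrable g (π.prod π) := hint_fst.sub hint_ex
  have hg_swap : Integrable (fun z ↦ g z.swap) (π.prod π) := hg.swap
  have hg_integral :
      ∫ z, g z ∂π.prod π = tCost π - tCost ((π.prod π).map (exchangeSnd S)) := by
    rw [integral_sub hint_fst hint_ex, integral_fun_fst, probReal_univ, one_smul,
      ← integral_map hem.aemeasurable hcm.aestronglyMeasurable]
    rfl
  have hsymm : S.indicator exchangeGain = fun z ↦ g z + g z.swap :=
    funext (indicator_exchangeGain_eq_add_swap hswap)
  refine ⟨hsymm ▸ hg.add hg_swap, ?_⟩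
  rw [hsymm, integral_add hg hg_swap, integral_prod_swap, hg_integral, two_mul]

lemma ae_exchangeGain_nonpos_of_mem_optPlan (hμ : μ ∈ (P2 : Set (Measure E)))
    (hν : ν ∈ (P2 : Set (Measure E))) (hπ : π ∈ OptPlan μ ν) :
    ∀ᵐ z ∂π.prod π, exchangeGain z ≤ 0 := by
  have := hπ.1.1
  set S : Set ((E × E) × (E × E)) := {z | 0 < exchangeGain z}
  have hS : MeasurableSet S := measurableSet_lt measurable_const measurable_exchangeGain
  have hswap : Prod.swap ⁻¹' S = S := Set.ext fun z ↦ by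
    simp only [S, Set.mem_preimage, Set.mem_ofPred_eq, exchangeGain_swap]
  have hex : (π.prod π).map (exchangeSnd S) ∈ Coupling μ ν :=
    map_exchangeSnd_mem_coupling hπ.1 hS hswap
  obtain ⟨hint, heq⟩ := integral_indicator_exchangeGain hS hswap
    (integrable_norm_sub_sq_of_mem_coupling hμ hν hπ.1)
    (integrable_norm_sub_sq_of_mem_coupling hμ hν hex)
  have hnonneg : 0 ≤ S.indicator exchangeGain := Set.indicator_nonneg fun z hz ↦ le_of_lt hz
  have hzero : S.indicator exchangeGain =ᵐ[π.prod π] 0 := by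
    refine (integral_eq_zero_iff_of_nonneg hnonneg hint).mp
      (le_antisymm ?_ (integral_nonneg hnonneg))
    linarith [(mem_optPlan_iff.mp hπ).2 _ hex]
  filter_upwards [hzero] with z hz
  by_contra! hpos
  exact hpos.ne' ((Set.indicator_of_mem (show z ∈ S from hpos) exchangeGain).symm.trans hz)

end QuadraticCost

section RealLine

lemma ofReal_norm_sub_sq (x y : ℝ) : ENNReal.ofReal (‖x - y‖ ^ 2) =
    volume (Set.Ico x y ×ˢ Set.Ico x y) + volume (Set.Ico y x ×ˢ Set.Ico y x) := by
  wlog hxy : x ≤ y generalizing x y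
  · rw [norm_sub_rev, add_comm]
    exact this y x (le_of_not_ge hxy)
  rw [Set.Ico_eq_empty_of_le hxy, Set.empty_prod, measure_empty, add_zero,
    Measure.volume_eq_prod, Measure.prod_prod, Real.volume_Ico, ← sq,
    ← ENNReal.ofReal_pow (sub_nonneg.mpr hxy), norm_sub_rev,
    Real.norm_of_nonneg (sub_nonneg.mpr hxy)]

variable {Ω : Type*} {X Y : Ω → ℝ}

/-- The points `(ω, s, t)` for which both levels `s` and `t` lie in `[X ω, Y ω)`. Its section at
`ω` is a square of area `(Y ω - X ω)²` when `X ω ≤ Y ω`, its section at `(s, t)` is a difference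
of two sublevel events. -/
def levelRegion (X Y : Ω → ℝ) : Set (Ω × (ℝ × ℝ)) :=
  {q | X q.1 ≤ min q.2.1 q.2.2} \ {q | Y q.1 ≤ max q.2.1 q.2.2}

lemma mk_preimage_levelRegion (X Y : Ω → ℝ) (ω : Ω) :
    Prod.mk ω ⁻¹' levelRegion X Y = Set.Ico (X ω) (Y ω) ×ˢ Set.Ico (X ω) (Y ω) := by
  ext z
  simp only [levelRegion, Set.mem_prod, Set.mem_Ico, Set.mem_preimage, Set.mem_sdiff,
    Set.mem_ofPred_eq, le_min_iff, not_le, max_lt_iff]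
  tauto

variable [MeasurableSpace Ω]

lemma measurableSet_levelRegion (hX : Measurable X) (hY : Measurable Y) :
    MeasurableSet (levelRegion X Y) :=
  (measurableSet_le (by fun_prop) (by fun_prop)).diff
    (measurableSet_le (by fun_prop) (by fun_prop))

lemma lintegral_norm_sub_sq {P : Measure Ω} [SFinite P] (hX : Measurable X) (hY : Measurable Y) :
    ∫⁻ ω, ENNReal.ofReal (‖X ω - Y ω‖ ^ 2) ∂P =
      ∫⁻ z : ℝ × ℝ, (P (X ⁻¹' Set.Iic (min z.1 z.2) \ Y ⁻¹' Set.Iic (max z.1 z.2)) +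
        P (Y ⁻¹' Set.Iic (min z.1 z.2) \ X ⁻¹' Set.Iic (max z.1 z.2))) := by
  have hXY := measurableSet_levelRegion hX hY
  have hYX := measurableSet_levelRegion hY hX
  calc ∫⁻ ω, ENNReal.ofReal (‖X ω - Y ω‖ ^ 2) ∂P
      = ∫⁻ ω, (volume (Prod.mk ω ⁻¹' levelRegion X Y) +
          volume (Prod.mk ω ⁻¹' levelRegion Y X)) ∂P := by
        simp only [ofReal_norm_sub_sq, mk_preimage_levelRegion]
    _ = P.prod volume (levelRegion X Y) + P.prod volume (levelRegion Y X) := by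
        rw [lintegral_add_left (measurable_measure_prodMk_left hXY), Measure.prod_apply hXY,
          Measure.prod_apply hYX]
    _ = ∫⁻ z : ℝ × ℝ, (P ((·, z) ⁻¹' levelRegion X Y) + P ((·, z) ⁻¹' levelRegion Y X)) := by
        rw [lintegral_add_left (measurable_measure_prodMk_right hXY),
          Measure.prod_apply_symm hXY, Measure.prod_apply_symm hYX]

variable {μ ν : Measure ℝ} {π : Measure (ℝ × ℝ)}

lemma comonotone_of_mem_optPlan (hμ : μ ∈ (P2 : Set (Measure ℝ)))
    (hν : ν ∈ (P2 : Set (Measure ℝ))) (hπ : π ∈ OptPlan μ ν) :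
    Comonotone π Prod.fst Prod.snd := by
  intro s t
  have := hπ.1.1
  rw [ae_le_set, ae_le_set, ← mul_eq_zero, ← Measure.prod_prod]
  refine measure_mono_null ?_ (ae_iff.mp (ae_exchangeGain_nonpos_of_mem_optPlan hμ hν hπ))
  rintro ⟨p, q⟩ ⟨⟨hp₁, hp₂⟩, ⟨hq₂, hq₁⟩⟩
  have hcross : 0 < (q.1 - p.1) * (p.2 - q.2) :=
    mul_pos (sub_pos.mpr (lt_of_le_of_lt hp₁ (not_le.mp hq₁)))
      (sub_pos.mpr (lt_of_le_of_lt hq₂ (not_le.mp hp₂)))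
  simp only [Set.mem_ofPred_eq, exchangeGain, Real.norm_eq_abs, sq_abs, not_le]
  linarith

lemma mem_optPlan_of_comonotone (hμ : μ ∈ (P2 : Set (Measure ℝ)))
    (hν : ν ∈ (P2 : Set (Measure ℝ))) (hπ : π ∈ Coupling μ ν)
    (h : Comonotone π Prod.fst Prod.snd) : π ∈ OptPlan μ ν := by
  refine mem_optPlan_iff.mpr ⟨hπ, fun π' hπ' ↦ ?_⟩
  have := hπ.1
  have := hπ'.1
  have hcost {κ : Measure (ℝ × ℝ)} (hκ : κ ∈ Coupling μ ν) :
      ENNReal.ofReal (tCost κ) = ∫⁻ p, ENNReal.ofReal (‖p.1 - p.2‖ ^ 2) ∂κ :=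
    ofReal_integral_eq_lintegral_ofReal (integrable_norm_sub_sq_of_mem_coupling hμ hν hκ)
      (.of_forall fun _ ↦ by positivity)
  have hfst (s : ℝ) : π (Prod.fst ⁻¹' Set.Iic s) = π' (Prod.fst ⁻¹' Set.Iic s) := by
    rw [(measurePreserving_fst_of_mem_coupling hπ).measure_preimage nullMeasurableSet_Iic,
      (measurePreserving_fst_of_mem_coupling hπ').measure_preimage nullMeasurableSet_Iic]
  have hsnd (t : ℝ) : π (Prod.snd ⁻¹' Set.Iic t) = π' (Prod.snd ⁻¹' Set.Iic t) := by
    rw [(measurePreserving_snd_of_mem_coupling hπ).measure_preimage nullMeasurableSet_Iic,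
      (measurePreserving_snd_of_mem_coupling hπ').measure_preimage nullMeasurableSet_Iic]
  have hnonneg : 0 ≤ tCost π' := integral_nonneg fun _ ↦ by positivity
  rw [← ENNReal.ofReal_le_ofReal_iff hnonneg, hcost hπ, hcost hπ',
    lintegral_norm_sub_sq measurable_fst measurable_snd,
    lintegral_norm_sub_sq measurable_fst measurable_snd]
  refine lintegral_mono fun z ↦ add_le_add ?_ ?_
  · exact measure_sdiff_le_of_ae_nested (measurable_snd measurableSet_Iic).nullMeasurableSet
      (h _ _) (hfst _) (hsnd _)
  · exact measure_sdiff_le_of_ae_nested (measurable_fst measurableSet_Iic).nullMeasurableSet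
      (h _ _).symm (hsnd _) (hfst _)

end RealLine

theorem bimarginals_1d_optimal_general {μ₁ μ₂ μ₃ : Measure ℝ} [NullSingletonClass μ₁]
    (h₁ : μ₁ ∈ (P2 : Set (Measure ℝ))) (h₂ : μ₂ ∈ (P2 : Set (Measure ℝ)))
    (h₃ : μ₃ ∈ (P2 : Set (Measure ℝ))) {ρ : Measure (ℝ × ℝ × ℝ)} (hρ : ρ ∈ Gamma μ₁ μ₂ μ₃) :
    ρ.map (fun p ↦ (p.2.1, p.2.2)) ∈ OptPlan μ₂ μ₃ := by
  obtain ⟨_, h₁₂, h₁₃⟩ := hρ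
  have hX : Measurable fun p : ℝ × ℝ × ℝ ↦ p.1 := by fun_prop
  have hY : Measurable fun p : ℝ × ℝ × ℝ ↦ p.2.1 := by fun_prop
  have hZ : Measurable fun p : ℝ × ℝ × ℝ ↦ p.2.2 := by fun_prop
  obtain ⟨hμ₁, hμ₂⟩ := (map_prodMk_mem_coupling_iff hX hY).mp h₁₂.1
  obtain ⟨-, hμ₃⟩ := (map_prodMk_mem_coupling_iff hX hZ).mp h₁₃.1
  have hXY := (comonotone_map_iff (hX.prodMk hY).aemeasurable measurable_fst measurable_snd).mp
    (comonotone_of_mem_optPlan h₁ h₂ h₁₂)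
  have hXZ := (comonotone_map_iff (hX.prodMk hZ).aemeasurable measurable_fst measurable_snd).mp
    (comonotone_of_mem_optPlan h₁ h₃ h₁₃)
  have : NullSingletonClass (ρ.map fun p ↦ p.1) := hμ₁ ▸ inferInstance
  have hYZ : Comonotone ρ (fun p ↦ p.2.1) (fun p ↦ p.2.2) :=
    .of_common_left hX.aemeasurable hY.aemeasurable hXY hXZ
  exact mem_optPlan_of_comonotone h₂ h₃ ((map_prodMk_mem_coupling_iff hY hZ).mpr ⟨hμ₂, hμ₃⟩)
    ((comonotone_map_iff (hY.prodMk hZ).aemeasurable measurable_fst measurable_snd).mpr hYZ)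

/-- for one-dimensional measures `μ1, μ2, μ3` with `μ1, μ2` atomless, a
3-plan whose (1,2)- and (1,3)-bimarginals are optimal has optimal (2,3)-bimarginal. -/
theorem bimarginals_1d_optimal (μ1 μ2 μ3 : Measure ℝ)
    (h1 : μ1 ∈ (P2 : Set (Measure ℝ))) (h2 : μ2 ∈ (P2 : Set (Measure ℝ)))
    (h3 : μ3 ∈ (P2 : Set (Measure ℝ)))
    (h1a : ∀ x : ℝ, μ1 {x} = 0) (h2a : ∀ x : ℝ, μ2 {x} = 0)
    (ρ : Measure (ℝ × ℝ × ℝ)) (hρ : IsProbabilityMeasure ρ)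
    (hm1 : ρ.map (fun p => p.1) = μ1)
    (hm2 : ρ.map (fun p => p.2.1) = μ2)
    (hm3 : ρ.map (fun p => p.2.2) = μ3)
    (h12 : ρ.map (fun p => (p.1, p.2.1)) ∈ OptPlan μ1 μ2)
    (h13 : ρ.map (fun p => (p.1, p.2.2)) ∈ OptPlan μ1 μ3) :
    ρ.map (fun p => (p.2.1, p.2.2)) ∈ OptPlan μ2 μ3 := by
  have : NullSingletonClass μ1 := ⟨h1a⟩
  exact bimarginals_1d_optimal_general h1 h2 h3 ⟨hρ, h12, h13⟩

end
end
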